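/- arXiv:2408.03442 — 3 statements merged into one kernel-verified Lean document; each statement's English description precedes it below -/
import Mathlib

section
/- Spectral theorem for quaternionic Hermitian matrices: let n be a positive integer and A an n×n matrix over the Hamilton quaternions ℍ with Aᴴ = A, where ᴴ denotes the conjugate transpose with respect to quaternionic conjugation. Then there exist an n×n matrix U over ℍ with Uᴴ·U = U·Uᴴ = 1 and real numbers d₁, …, d_n such that A = Uᴴ·D·U, where D is the diagonal matrix whose entries are the real scalars d₁, …, d_n. -/
/-!
For the real inner product `Re (xᴴ y)` on `ℍⁿ`, a Hermitian matrix acts as a symmetric real-linear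
operator, so it has a real eigenvalue on every nonzero invariant real subspace. If the columns of a
rectangular matrix `V` are orthonormal eigenvectors, say `Vᴴ V = 1` and `A V = V D`, then
`Vᴴ A = Dᴴ Vᴴ`, so `A` preserves the kernel of `Vᴴ`. This kernel is nonzero as long as `V` has fewer
columns than rows, and a unit eigenvector in it is a new column for `V`. Once `V` is square it is
unitary, and `U = Vᴴ`.
-/

open Quaternion Matrix

section SymmetricOperator

variable {𝕜 E : Type*} [RCLike 𝕜] [NormedAddCommGroup E] [InnerProductSpace 𝕜 E]

lemma exists_unit_eigenvector_mem_of_isSymmetric {T : E →ₗ[𝕜] E} (hT : T.IsSymmetric)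
    {W : Submodule 𝕜 E} [FiniteDimensional 𝕜 W] (hW : W ≠ ⊥) (hTW : ∀ x ∈ W, T x ∈ W) :
    ∃ x ∈ W, ∃ c : ℝ, ‖x‖ = 1 ∧ T x = (c : 𝕜) • x := by
  have : Nontrivial W := Submodule.nontrivial_iff_ne_bot.mpr hW
  obtain ⟨c, hc⟩ : ∃ c : ℝ, Module.End.HasEigenvalue (T.restrict hTW) (c : 𝕜) :=
    ⟨_, (hT.restrict_invariant hTW).hasEigenvalue_iSup_of_finiteDimensional⟩
  obtain ⟨w, hw⟩ := hc.exists_hasEigenvector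
  have hw₀ : (w : E) ≠ 0 := by simpa using hw.2
  have hTw : T w = (c : 𝕜) • (w : E) := congrArg Subtype.val hw.apply_eq_smul
  refine ⟨(‖(w : E)‖⁻¹ : 𝕜) • (w : E), W.smul_mem _ w.2, c, norm_smul_inv_norm hw₀, ?_⟩
  rw [map_smul, hTw, smul_comm]

end SymmetricOperator

lemma ker_mulVecBilin_ne_bot_of_card_lt {K R m n : Type*} [Field K] [Ring R] [Algebra K R]
    [Module.Finite K R] [Nontrivial R] [Fintype m] [Fintype n] (M : Matrix m n R)
    (h : Fintype.card m < Fintype.card n) : LinearMap.ker (mulVecBilin K K M) ≠ ⊥ := by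
  apply LinearMap.ker_ne_bot_of_finrank_lt
  rw [Module.finrank_pi_fintype, Module.finrank_pi_fintype]
  simpa [Module.finrank_pos] using h

section QuaternionVector

variable {n : Type*} [Fintype n]

lemma re_star_dotProduct_eq_inner (x y : n → ℍ[ℝ]) :
    (star x ⬝ᵥ y).re = inner ℝ (WithLp.toLp 2 x) (WithLp.toLp 2 y) := by
  have re_sum (f : n → ℍ[ℝ]) : (∑ i, f i).re = ∑ i, (f i).re :=
    map_sum (QuaternionAlgebra.reₗ (R := ℝ) (-1) 0 (-1)) f Finset.univ
  rw [PiLp.inner_apply, dotProduct, re_sum]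
  refine Finset.sum_congr rfl fun i _ => ?_
  simp [Quaternion.inner_def]

lemma star_dotProduct_self_eq_norm_sq (x : n → ℍ[ℝ]) :
    star x ⬝ᵥ x = ((‖WithLp.toLp 2 x‖ ^ 2 : ℝ) : ℍ[ℝ]) := by
  have coe_sum (f : n → ℝ) : ((∑ i, f i : ℝ) : ℍ[ℝ]) = ∑ i, (f i : ℍ[ℝ]) :=
    map_sum (algebraMap ℝ ℍ[ℝ]) f Finset.univ
  rw [PiLp.norm_sq_eq_of_L2, dotProduct, coe_sum]
  refine Finset.sum_congr rfl fun i _ => ?_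
  rw [Pi.star_apply, Quaternion.star_mul_self, Quaternion.normSq_eq_norm_mul_self, sq]

lemma isSymmetric_withLpMap_mulVecBilin {A : Matrix n n ℍ[ℝ]} (hA : A.IsHermitian) :
    ((mulVecBilin ℝ ℝ A).withLpMap 2).IsSymmetric := by
  intro x y
  calc inner ℝ (WithLp.toLp 2 (A *ᵥ x.ofLp)) y
      = (star (A *ᵥ x.ofLp) ⬝ᵥ y.ofLp).re := (re_star_dotProduct_eq_inner _ _).symm
    _ = (star x.ofLp ⬝ᵥ A *ᵥ y.ofLp).re := by rw [star_mulVec, hA.eq, dotProduct_mulVec]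
    _ = inner ℝ x (WithLp.toLp 2 (A *ᵥ y.ofLp)) := re_star_dotProduct_eq_inner _ _

lemma exists_unit_eigenvector_mem_of_isHermitian {A : Matrix n n ℍ[ℝ]} (hA : A.IsHermitian)
    {W : Submodule ℝ (n → ℍ[ℝ])} (hW : W ≠ ⊥) (hAW : ∀ x ∈ W, A *ᵥ x ∈ W) :
    ∃ x ∈ W, ∃ c : ℝ, star x ⬝ᵥ x = 1 ∧ A *ᵥ x = c • x := by
  let e := (WithLp.linearEquiv 2 ℝ (n → ℍ[ℝ])).symm
  have heW : W.map (e : (n → ℍ[ℝ]) →ₗ[ℝ] WithLp 2 (n → ℍ[ℝ])) ≠ ⊥ := by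
    rwa [Ne, Submodule.map_eq_bot_iff]
  obtain ⟨_, ⟨x, hx, rfl⟩, c, hnorm, hAx⟩ := exists_unit_eigenvector_mem_of_isSymmetric
    (isSymmetric_withLpMap_mulVecBilin hA) heW (by
      rintro _ ⟨x, hx, rfl⟩
      exact ⟨A *ᵥ x, hAW x hx, rfl⟩)
  refine ⟨x, hx, c, ?_, congrArg WithLp.ofLp hAx⟩
  have hnorm' : ‖WithLp.toLp 2 x‖ = 1 := hnorm
  simp [star_dotProduct_self_eq_norm_sq, hnorm']

end QuaternionVector

/-- The columns of `V` are orthonormal eigenvectors of `A`, with eigenvalues `d` acting from the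
right: `A vⱼ = vⱼ dⱼ`. There may be fewer columns than rows. -/
structure IsOrthonormalEigenframe {R m k : Type*} [Semiring R] [StarRing R] [Fintype m] [Fintype k]
    [DecidableEq k] (A : Matrix m m R) (V : Matrix m k R) (d : k → R) : Prop where
  conjTranspose_mul_self : Vᴴ * V = 1
  mul_eq_mul_diagonal : A * V = V * diagonal d

namespace IsOrthonormalEigenframe

section Semiring

variable {R m k l : Type*} [Semiring R] [StarRing R] [Fintype m] [Fintype k] [DecidableEq k]
  [Fintype l] [DecidableEq l] {A : Matrix m m R} {V : Matrix m k R} {d : k → R}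

lemma reindex (hV : IsOrthonormalEigenframe A V d) (e : l ≃ k) :
    IsOrthonormalEigenframe A (V.submatrix id e) (d ∘ e) where
  conjTranspose_mul_self := by
    rw [conjTranspose_submatrix, ← submatrix_mul _ _ e id e Function.bijective_id,
      hV.conjTranspose_mul_self, submatrix_one_equiv]
  mul_eq_mul_diagonal := by
    rw [← submatrix_diagonal_equiv, submatrix_mul_equiv, ← hV.mul_eq_mul_diagonal,
      submatrix_mul _ _ id id e Function.bijective_id, submatrix_id_id]

lemma fromCols (hV : IsOrthonormalEigenframe A V d) {W : Matrix m l R} {c : l → R}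
    (hW : IsOrthonormalEigenframe A W c) (hVW : Vᴴ * W = 0) :
    IsOrthonormalEigenframe A (Matrix.fromCols V W) (Sum.elim d c) where
  conjTranspose_mul_self := by
    have hWV : Wᴴ * V = 0 := by simpa using congrArg conjTranspose hVW
    rw [conjTranspose_fromCols_eq_fromRows_conjTranspose, fromRows_mul_fromCols,
      hV.conjTranspose_mul_self, hW.conjTranspose_mul_self, hVW, hWV, fromBlocks_one]
  mul_eq_mul_diagonal := by
    rw [mul_fromCols, hV.mul_eq_mul_diagonal, hW.mul_eq_mul_diagonal, ← fromBlocks_diagonal,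
      fromCols_mul_fromBlocks]
    simp only [Matrix.mul_zero, add_zero, zero_add]

lemma replicateCol [Unique l] {x : m → R} {c : R} (hx : star x ⬝ᵥ x = 1)
    (hAx : A *ᵥ x = MulOpposite.op c • x) :
    IsOrthonormalEigenframe A (Matrix.replicateCol l x) (fun _ => c) where
  conjTranspose_mul_self := by
    ext i j
    rw [conjTranspose_replicateCol, replicateRow_mul_replicateCol_apply, hx,
      Subsingleton.elim i j, one_apply_eq]
  mul_eq_mul_diagonal := by
    rw [← replicateCol_mulVec, hAx, replicateCol_smul, op_smul_eq_mul_diagonal]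

lemma conjTranspose_mul (hA : A.IsHermitian) (hV : IsOrthonormalEigenframe A V d) :
    Vᴴ * A = diagonal (star d) * Vᴴ := by
  simpa [hA.eq] using congrArg conjTranspose hV.mul_eq_mul_diagonal

lemma conjTranspose_mulVec_mulVec_eq_zero (hA : A.IsHermitian)
    (hV : IsOrthonormalEigenframe A V d) {x : m → R} (hx : Vᴴ *ᵥ x = 0) :
    Vᴴ *ᵥ A *ᵥ x = 0 := by
  rw [mulVec_mulVec, hV.conjTranspose_mul hA, ← mulVec_mulVec, hx, mulVec_zero]

end Semiring

section StablyFinite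

variable {R n : Type*} [Ring R] [StarRing R] [IsStablyFiniteRing R] [Fintype n] [DecidableEq n]
  {A V : Matrix n n R} {d : n → R}

lemma self_mul_conjTranspose (hV : IsOrthonormalEigenframe A V d) : V * Vᴴ = 1 :=
  mul_eq_one_symm hV.conjTranspose_mul_self

lemma eq_mul_diagonal_mul_conjTranspose (hV : IsOrthonormalEigenframe A V d) :
    A = V * diagonal d * Vᴴ := by
  rw [← hV.mul_eq_mul_diagonal, Matrix.mul_assoc, hV.self_mul_conjTranspose, Matrix.mul_one]

end StablyFinite

section Quaternion

variable {n k : Type*} [Fintype n] [Fintype k] [DecidableEq k] {A : Matrix n n ℍ[ℝ]}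
  {V : Matrix n k ℍ[ℝ]} {d : k → ℍ[ℝ]}

lemma exists_orthogonal_unit_eigenvector (hA : A.IsHermitian) (hV : IsOrthonormalEigenframe A V d)
    (h : Fintype.card k < Fintype.card n) :
    ∃ (x : n → ℍ[ℝ]) (c : ℝ), Vᴴ *ᵥ x = 0 ∧ star x ⬝ᵥ x = 1 ∧ A *ᵥ x = c • x := by
  obtain ⟨x, hVx, c, hxx, hAx⟩ := exists_unit_eigenvector_mem_of_isHermitian hA
    (ker_mulVecBilin_ne_bot_of_card_lt Vᴴ h)
    fun x hx => hV.conjTranspose_mulVec_mulVec_eq_zero hA hx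
  exact ⟨x, c, hVx, hxx, hAx⟩

lemma exists_fromCols_replicateCol (hA : A.IsHermitian) (hV : IsOrthonormalEigenframe A V d)
    (h : Fintype.card k < Fintype.card n) :
    ∃ (x : n → ℍ[ℝ]) (c : ℝ),
      IsOrthonormalEigenframe A (Matrix.fromCols V (Matrix.replicateCol (Fin 1) x))
        (Sum.elim d fun _ => (c : ℍ[ℝ])) := by
  obtain ⟨x, c, hVx, hxx, hAx⟩ := hV.exists_orthogonal_unit_eigenvector hA h
  have hAx' : A *ᵥ x = MulOpposite.op (c : ℍ[ℝ]) • x := by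
    rw [hAx]
    ext1 i
    rw [Pi.smul_apply, Pi.smul_apply, op_smul_eq_mul, ← Quaternion.coe_commutes,
      Quaternion.coe_mul_eq_smul]
  have hVX : Vᴴ * Matrix.replicateCol (Fin 1) x = 0 := by
    rw [← replicateCol_mulVec, hVx, replicateCol_zero]
  exact ⟨x, c, hV.fromCols (.replicateCol hxx hAx') hVX⟩

end Quaternion

end IsOrthonormalEigenframe

section SpectralTheorem

variable {n : Type*} [Fintype n] {A : Matrix n n ℍ[ℝ]}

lemma exists_isOrthonormalEigenframe_fin (hA : A.IsHermitian) {k : ℕ} (hk : k ≤ Fintype.card n) :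
    ∃ (V : Matrix n (Fin k) ℍ[ℝ]) (d : Fin k → ℝ),
      IsOrthonormalEigenframe A V (fun i => (d i : ℍ[ℝ])) := by
  induction k with
  | zero => exact ⟨0, 0, Subsingleton.elim _ _, Subsingleton.elim _ _⟩
  | succ k ih =>
    obtain ⟨V, d, hV⟩ := ih (by lia)
    obtain ⟨x, c, hVx⟩ := hV.exists_fromCols_replicateCol hA (by simpa using hk)
    have hd : Sum.elim (fun i => (d i : ℍ[ℝ])) (fun _ : Fin 1 => (c : ℍ[ℝ])) =
        fun i => ((Sum.elim d (fun _ => c) i : ℝ) : ℍ[ℝ]) :=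
      (Sum.comp_elim _ _ _).symm
    rw [hd] at hVx
    exact ⟨_, _, hVx.reindex finSumFinEquiv.symm⟩

lemma exists_isOrthonormalEigenframe [DecidableEq n] (hA : A.IsHermitian) :
    ∃ (V : Matrix n n ℍ[ℝ]) (d : n → ℝ), IsOrthonormalEigenframe A V (fun i => (d i : ℍ[ℝ])) := by
  obtain ⟨V, d, hV⟩ := exists_isOrthonormalEigenframe_fin hA le_rfl
  exact ⟨_, _, hV.reindex (Fintype.equivFin n)⟩

theorem stmt13_general [DecidableEq n] (hA : A.IsHermitian) :
    ∃ (U : Matrix n n ℍ[ℝ]) (d : n → ℝ),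
      Uᴴ * U = 1 ∧ U * Uᴴ = 1 ∧ A = Uᴴ * diagonal (fun i => (d i : ℍ[ℝ])) * U := by
  obtain ⟨V, d, hV⟩ := exists_isOrthonormalEigenframe hA
  refine ⟨Vᴴ, d, ?_⟩
  rw [conjTranspose_conjTranspose]
  exact ⟨hV.self_mul_conjTranspose, hV.conjTranspose_mul_self,
    hV.eq_mul_diagonal_mul_conjTranspose⟩

end SpectralTheorem

/-- Spectral theorem for quaternionic Hermitian matrices: any Hermitian `n × n`
matrix over the Hamilton quaternions is unitarily diagonalizable with real
eigenvalues. -/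
theorem stmt13 (n : ℕ) (hn : 0 < n) (A : Matrix (Fin n) (Fin n) ℍ[ℝ])
    (hA : Aᴴ = A) :
    ∃ (U : Matrix (Fin n) (Fin n) ℍ[ℝ]) (d : Fin n → ℝ),
      Uᴴ * U = 1 ∧ U * Uᴴ = 1 ∧
      A = Uᴴ * Matrix.diagonal (fun i => ((d i : ℝ) : ℍ[ℝ])) * U :=
  stmt13_general hA
end

section
/- Let ℓ be a prime, m ≥ 1 an integer, and λ ∈ ℤ. Then the character sum over 2×2 matrices modulo ℓ^m satisfies Σ_{x ∈ M₂(ℤ/ℓ^mℤ)} ω_m(λ·det x) = ℓ^{2m}·[λ]_m², where det x is computed from any integer lift of x (the value λ·det x modulo ℓ^m is well defined). -/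
open Finset

/-!
The determinant of a `2 × 2` matrix is the dot product of its first row `u` with a rotation `v` of
its second row, so the sum is that of `χ (c * (u ⬝ᵥ v))` over pairs of vectors, where `χ` is the
standard additive character of `ℤ/Nℤ`. It factors over the coordinates into the square of
`∑ a, ∑ b, χ (c * (a * b))`. By orthogonality the sum over `b` is `N` when `c * a = 0` and `0`
otherwise, and the kernel of multiplication by `c` on the cyclic group `ℤ/Nℤ` has `gcd(N, c)`
elements.
-/

theorem addChar_sum_eq_prod {A M ι : Type*} [AddCommMonoid A] [CommMonoid M] (ψ : AddChar A M)
    (s : Finset ι) (f : ι → A) : ψ (∑ i ∈ s, f i) = ∏ i ∈ s, ψ (f i) :=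
  map_prod ψ.toMonoidHom (fun i ↦ Multiplicative.ofAdd (f i)) s

section AddChar

variable {R R' : Type*} [CommRing R] [Fintype R] [DecidableEq R] [CommRing R'] [IsDomain R']
  {ψ : AddChar R R'}

theorem sum_addChar_mul_mul (hψ : ψ.IsPrimitive) (c : R) :
    ∑ a, ∑ b, ψ (c * (a * b)) = (Fintype.card R * #{a | c * a = 0} : R') := by
  have orthogonality (a : R) :
      ∑ b, ψ (c * (a * b)) = if c * a = 0 then (Fintype.card R : R') else 0 := by
    simpa only [mul_assoc, mul_comm, mul_left_comm, Nat.cast_ite, Nat.cast_zero] using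
      AddChar.sum_mulShift (c * a) hψ
  simp_rw [orthogonality]
  rw [← sum_filter, sum_const, nsmul_eq_mul, mul_comm]

theorem sum_addChar_mul_dotProduct {ι : Type*} [Fintype ι] [DecidableEq ι] (hψ : ψ.IsPrimitive)
    (c : R) :
    ∑ u : ι → R, ∑ v : ι → R, ψ (c * (u ⬝ᵥ v)) =
      (Fintype.card R * #{a | c * a = 0} : R') ^ Fintype.card ι := by
  have addChar_eq_prod (u v : ι → R) : ψ (c * (u ⬝ᵥ v)) = ∏ i, ψ (c * (u i * v i)) := by
    rw [dotProduct, mul_sum, addChar_sum_eq_prod]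
  simp_rw [addChar_eq_prod]
  calc ∑ u : ι → R, ∑ v : ι → R, ∏ i, ψ (c * (u i * v i))
      = ∑ u : ι → R, ∏ i, ∑ b, ψ (c * (u i * b)) := by simp_rw [Fintype.prod_sum]
    _ = ∏ _i : ι, ∑ a, ∑ b, ψ (c * (a * b)) :=
        (Fintype.prod_sum fun (_ : ι) a ↦ ∑ b, ψ (c * (a * b))).symm
    _ = _ := by rw [prod_const, card_univ, sum_addChar_mul_mul hψ]

theorem sum_addChar_mul_det_fin_two (hψ : ψ.IsPrimitive) (c : R) :
    ∑ A : Matrix (Fin 2) (Fin 2) R, ψ (c * A.det) =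
      (Fintype.card R * #{a | c * a = 0} : R') ^ 2 := by
  let rotation : (Fin 2 → R) ≃ (Fin 2 → R) :=
    { toFun v := ![v 1, -v 0]
      invFun w := ![-w 1, w 0]
      left_inv v := by ext i; fin_cases i <;> simp
      right_inv w := by ext i; fin_cases i <;> simp }
  have det_eq_dotProduct (A : Matrix (Fin 2) (Fin 2) R) : A.det = A 0 ⬝ᵥ rotation (A 1) := by
    simp [rotation, Matrix.det_fin_two, dotProduct, sub_eq_add_neg]
  let rows := (finTwoArrowEquiv (Fin 2 → R)).trans ((Equiv.refl _).prodCongr rotation)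
  calc ∑ A : Matrix (Fin 2) (Fin 2) R, ψ (c * A.det)
      = ∑ p : (Fin 2 → R) × (Fin 2 → R), ψ (c * (p.1 ⬝ᵥ p.2)) :=
        Fintype.sum_equiv (Matrix.of.symm.trans rows) _ _ fun A ↦ by rw [det_eq_dotProduct]; rfl
    _ = _ := by rw [Fintype.sum_prod_type, sum_addChar_mul_dotProduct hψ, Fintype.card_fin]

end AddChar

theorem card_zmod_intCast_mul_eq_zero (N : ℕ) [NeZero N] (c : ℤ) :
    #{a : ZMod N | (c : ZMod N) * a = 0} = Int.gcd N c := by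
  have card_ker := IsAddCyclic.card_nsmulAddMonoidHom_ker (G := ZMod N) c.natAbs
  rw [Nat.card_zmod] at card_ker
  rw [Int.gcd_def, Int.natAbs_natCast, ← card_ker, ← Fintype.card_subtype,
    ← Nat.card_eq_fintype_card]
  refine Nat.card_congr (Equiv.subtypeEquivRight fun a ↦ ?_)
  rw [AddMonoidHom.mem_ker, nsmulAddMonoidHom_apply, nsmul_eq_mul]
  obtain ⟨n, rfl | rfl⟩ := c.eq_nat_or_neg <;> simp

theorem gcd_prime_pow_eq_pow_min {p : ℕ} (hp : p.Prime) (m : ℕ) {a : ℤ} (ha : a ≠ 0) :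
    Int.gcd ((p : ℤ) ^ m) a = p ^ min m (padicValInt p a) := by
  obtain ⟨k, -, hk⟩ := (Nat.dvd_prime_pow hp).1 (Nat.gcd_dvd_left (p ^ m) a.natAbs)
  have exponent_eq : k = min m (padicValInt p a) := by
    have := congrArg (fun n ↦ n.factorization p) hk
    simpa [Nat.factorization_gcd, hp.ne_zero, ha, hp.factorization_self, padicValInt,
      Nat.factorization_def _ hp] using this.symm
  rw [Int.gcd_def, Int.natAbs_pow, Int.natAbs_natCast, hk, exponent_eq]

theorem bijective_natCast_fin_zmod (N : ℕ) [NeZero N] :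
    Function.Bijective fun a : Fin N ↦ ((a : ℕ) : ZMod N) := by
  refine (Fintype.bijective_iff_surjective_and_card _).2 ⟨fun z ↦ ?_, by simp⟩
  exact ⟨⟨z.val, z.val_lt⟩, ZMod.natCast_zmod_val z⟩

theorem stmt17_general (N : ℕ) [NeZero N] (c : ℤ) :
    ∑ x : Fin 2 → Fin 2 → Fin N,
        Complex.exp (2 * Real.pi * Complex.I *
          ((c * (Matrix.of fun i j ↦ ((x i j : ℕ) : ℤ)).det : ℤ) : ℂ) / (N : ℂ)) =
      (N : ℂ) ^ 2 * (Int.gcd N c : ℂ) ^ 2 := by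
  let reduction := Equiv.ofBijective _ (bijective_natCast_fin_zmod N)
  have sum_zmod := sum_addChar_mul_det_fin_two (ZMod.isPrimitive_stdAddChar N) (c : ZMod N)
  rw [ZMod.card, card_zmod_intCast_mul_eq_zero, mul_pow] at sum_zmod
  rw [← sum_zmod]
  refine Fintype.sum_equiv (Matrix.of.trans reduction.mapMatrix) _ _ fun x ↦ ?_
  rw [← ZMod.stdAddChar_coe, Int.cast_mul, Int.cast_det]
  congr 3
  ext i j
  exact Int.cast_natCast _

/-- For a prime `ℓ`, `m ≥ 1` and `λ ∈ ℤ`, the character sum over `2 × 2` matrices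
modulo `ℓ^m` satisfies `Σ_x ω_m(λ·det x) = ℓ^{2m}·[λ]_m²`, where
`ω_m(t) = exp(2πi·t/ℓ^m)` and `[λ]_m = ℓ^{min(m, v_ℓ(λ))}` with `v_ℓ(0) = ∞`. -/
theorem stmt17 (ℓ : ℕ) (hℓ : ℓ.Prime) (m : ℕ) (hm : 1 ≤ m) (lam : ℤ) :
    ∑ x : Fin 2 → Fin 2 → Fin (ℓ ^ m),
        Complex.exp (2 * Real.pi * Complex.I *
          ((lam * (Matrix.of fun i j => ((x i j : ℕ) : ℤ)).det : ℤ) : ℂ) /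
            (ℓ : ℂ) ^ m)
      = (ℓ : ℂ) ^ (2 * m) *
          (if lam = 0 then (ℓ : ℂ) ^ m
            else (ℓ : ℂ) ^ min m (padicValInt ℓ lam)) ^ 2 := by
  have : NeZero (ℓ ^ m) := ⟨pow_ne_zero m hℓ.ne_zero⟩
  split_ifs with h <;>
    simpa [h, gcd_prime_pow_eq_pow_min hℓ, pow_mul'] using stmt17_general (ℓ ^ m) lam
end

section
/- Let ℓ be a prime, m ≥ 0 an integer, and d₁, d₂ nonzero integers. Set v = min(m, v_ℓ(d₁)) and v' = min(m, v_ℓ(d₂)), and for each integer c with 0 ≤ c < ℓ^m set w(c) = min(m, v_ℓ(d₁), v_ℓ(c)), with the convention v_ℓ(0) = ∞. Then Σ_{c=0}^{ℓ^m − 1} exp(2πi·c·d₂/ℓ^m)·(Σ_{k=0}^{w(c)} ℓ^{−k}) = ℓ^{m−2v}·Σ_{j=0}^{v+v'−m} ℓ^{2j}, where the sum on the right-hand side is empty (equal to 0) when v + v' < m. -/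
/-!
Write `k ≤ w c` as `k ≤ v ∧ ℓ ^ k ∣ c` and exchange the two summations. For fixed `k`, the
substitution `c = ℓ ^ k * b` turns the sum over `c` into the full additive character sum of
`exp (2πi b d₂ / ℓ ^ (m - k))` over `b` modulo `ℓ ^ (m - k)`, which by orthogonality is
`ℓ ^ (m - k)` if `ℓ ^ (m - k) ∣ d₂`, that is if `m - v' ≤ k`, and `0` otherwise. What remains is the
sum of `ℓ ^ (m - 2 k)` over `m - v' ≤ k ≤ v`, and `k = v - j` makes it the right-hand side.
-/

open Finset

lemma sum_range_natCast_zmod {M : Type*} [AddCommMonoid M] (N : ℕ) [NeZero N] (f : ZMod N → M) :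
    ∑ b ∈ range N, f b = ∑ x, f x :=
  sum_bij' (fun b _ ↦ (b : ZMod N)) (fun x _ ↦ x.val) (fun _ _ ↦ mem_univ _)
    (fun x _ ↦ mem_range.2 x.val_lt) (fun _ hb ↦ ZMod.val_cast_of_lt (mem_range.1 hb))
    (fun x _ ↦ ZMod.natCast_zmod_val x) (fun _ _ ↦ rfl)

lemma sum_range_exp_two_pi_I_mul_div {N : ℕ} (hN : N ≠ 0) (d : ℤ) :
    ∑ b ∈ range N, Complex.exp (2 * Real.pi * Complex.I * ((b * d : ℤ) : ℂ) / N) =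
      if (N : ℤ) ∣ d then (N : ℂ) else 0 := by
  have : NeZero N := ⟨hN⟩
  calc ∑ b ∈ range N, Complex.exp (2 * Real.pi * Complex.I * ((b * d : ℤ) : ℂ) / N)
      = ∑ b ∈ range N, ZMod.stdAddChar ((b : ZMod N) * (d : ZMod N)) :=
        sum_congr rfl fun b _ ↦ by rw [← ZMod.stdAddChar_coe, Int.cast_mul, Int.cast_natCast]
    _ = ∑ x : ZMod N, ZMod.stdAddChar (x * (d : ZMod N)) :=
        sum_range_natCast_zmod N fun x ↦ ZMod.stdAddChar (x * (d : ZMod N))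
    _ = if (N : ℤ) ∣ d then (N : ℂ) else 0 := by
        rw [AddChar.sum_mulShift _ (ZMod.isPrimitive_stdAddChar N), ZMod.card]
        simp only [ZMod.intCast_zmod_eq_zero_iff_dvd, Nat.cast_ite, Nat.cast_zero]

lemma sum_range_mul_filter_dvd {M : Type*} [AddCommMonoid M] {a : ℕ} (ha : a ≠ 0) (n : ℕ)
    (f : ℕ → M) : ∑ c ∈ range (a * n) with a ∣ c, f c = ∑ b ∈ range n, f (a * b) := by
  have ha' : 0 < a := Nat.pos_of_ne_zero ha
  refine sum_nbij' (· / a) (a * ·) ?_ ?_ ?_ ?_ ?_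
  · intro c hc
    exact mem_range.2 (Nat.div_lt_of_lt_mul (mem_range.1 (mem_filter.1 hc).1))
  · intro b hb
    exact mem_filter.2
      ⟨mem_range.2 (Nat.mul_lt_mul_of_pos_left (mem_range.1 hb) ha'), dvd_mul_right a b⟩
  · exact fun c hc ↦ Nat.mul_div_cancel' (mem_filter.1 hc).2
  · exact fun b _ ↦ Nat.mul_div_cancel_left b ha'
  · exact fun c hc ↦ by rw [Nat.mul_div_cancel' (mem_filter.1 hc).2]

lemma sum_range_mul_filter_dvd_exp {a n : ℕ} (ha : a ≠ 0) (hn : n ≠ 0) (d : ℤ) :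
    ∑ c ∈ range (a * n) with a ∣ c,
        Complex.exp (2 * Real.pi * Complex.I * ((c * d : ℤ) : ℂ) / (a * n : ℕ)) =
      if (n : ℤ) ∣ d then (n : ℂ) else 0 := by
  rw [sum_range_mul_filter_dvd ha, ← sum_range_exp_two_pi_I_mul_div hn]
  refine sum_congr rfl fun b _ ↦ congrArg Complex.exp ?_
  have ha' : (a : ℂ) ≠ 0 := Nat.cast_ne_zero.2 ha
  push_cast
  field_simp

lemma sum_range_pow_filter_pow_dvd_exp {ℓ k m : ℕ} (hℓ : ℓ ≠ 0) (hk : k ≤ m) (d : ℤ) :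
    ∑ c ∈ range (ℓ ^ m) with ℓ ^ k ∣ c,
        Complex.exp (2 * Real.pi * Complex.I * ((c * d : ℤ) : ℂ) / (ℓ : ℂ) ^ m) =
      if (ℓ : ℤ) ^ (m - k) ∣ d then (ℓ : ℂ) ^ (m - k) else 0 := by
  have h := sum_range_mul_filter_dvd_exp (pow_ne_zero k hℓ) (pow_ne_zero (m - k) hℓ) d
  simpa only [← pow_add, Nat.add_sub_cancel' hk, Nat.cast_pow] using h

lemma le_iff_of_eq_min_emultiplicity {M : Type*} [Monoid M] {a b : M} {n v k : ℕ}
    (hv : (v : ℕ∞) = min (n : ℕ∞) (emultiplicity a b)) : k ≤ v ↔ k ≤ n ∧ a ^ k ∣ b := by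
  rw [← Nat.cast_le (α := ℕ∞), hv, le_min_iff, Nat.cast_le, pow_dvd_iff_le_emultiplicity]

lemma sum_mul_sum_range_emultiplicity {R : Type*} [NonUnitalNonAssocSemiring R] {ℓ v : ℕ}
    {w : ℕ → ℕ} (hw : ∀ c, (w c : ℕ∞) = min (v : ℕ∞) (emultiplicity ℓ c)) (s : Finset ℕ)
    (f g : ℕ → R) :
    ∑ c ∈ s, f c * ∑ k ∈ range (w c + 1), g k =
      ∑ k ∈ range (v + 1), (∑ c ∈ s with ℓ ^ k ∣ c, f c) * g k := by
  simp only [mul_sum, sum_mul]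
  refine sum_comm' fun c k ↦ ?_
  simp only [mem_range, Nat.lt_succ_iff, mem_filter, le_iff_of_eq_min_emultiplicity (hw c)]
  tauto

theorem sum_range_exp_mul_sum_range_emultiplicity {ℓ m v v' : ℕ} {d : ℤ} {w : ℕ → ℕ}
    (hℓ : ℓ ≠ 0) (hv : v ≤ m) (hv' : (v' : ℕ∞) = min (m : ℕ∞) (emultiplicity (ℓ : ℤ) d))
    (hw : ∀ c, (w c : ℕ∞) = min (v : ℕ∞) (emultiplicity ℓ c)) (g : ℕ → ℂ) :
    ∑ c ∈ range (ℓ ^ m),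
        Complex.exp (2 * Real.pi * Complex.I * ((c * d : ℤ) : ℂ) / (ℓ : ℂ) ^ m) *
          ∑ k ∈ range (w c + 1), g k =
      ∑ k ∈ Icc (m - v') v, (ℓ : ℂ) ^ (m - k) * g k := by
  have pow_dvd_iff (k : ℕ) : (ℓ : ℤ) ^ (m - k) ∣ d ↔ m - v' ≤ k := by
    rw [tsub_le_iff_tsub_le, le_iff_of_eq_min_emultiplicity hv', and_iff_right (Nat.sub_le m k)]
  have filter_eq : {k ∈ range (v + 1) | m - v' ≤ k} = Icc (m - v') v := by grind
  rw [sum_mul_sum_range_emultiplicity hw, ← filter_eq, sum_filter]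
  refine sum_congr rfl fun k hk ↦ ?_
  have hkm : k ≤ m := (Nat.lt_succ_iff.1 (mem_range.1 hk)).trans hv
  simp only [sum_range_pow_filter_pow_dvd_exp hℓ hkm, pow_dvd_iff, ite_mul, zero_mul]

lemma sum_Icc_pow_sub_mul_inv_pow {K : Type*} [Field K] {x : K} (hx : x ≠ 0) {m v v' : ℕ}
    (hv : v ≤ m) (hv' : v' ≤ m) :
    ∑ k ∈ Icc (m - v') v, x ^ (m - k) * (x ^ k)⁻¹ =
      x ^ ((m : ℤ) - 2 * v) * ∑ j ∈ range (v + v' + 1 - m), x ^ (2 * j) := by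
  rw [mul_sum]
  refine sum_nbij' (v - ·) (v - ·) (by grind) (by grind) (by grind) (by grind) fun k hk ↦ ?_
  have hkv : k ≤ v := (mem_Icc.1 hk).2
  rw [← zpow_natCast, ← zpow_natCast, ← zpow_natCast, ← zpow_neg, ← zpow_add₀ hx,
    ← zpow_add₀ hx]
  congr 1
  omega

lemma natCast_padicValInt_eq_emultiplicity {p : ℕ} (hp : p ≠ 1) {z : ℤ} (hz : z ≠ 0) :
    (padicValInt p z : ℕ∞) = emultiplicity (p : ℤ) z := by
  rw [padicValInt, padicValNat_eq_emultiplicity_of_ne_one hp (Int.natAbs_ne_zero.2 hz),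
    Int.emultiplicity_natAbs]

lemma natCast_ite_min_padicValNat {p : ℕ} (hp : p ≠ 1) (v c : ℕ) :
    ((if c = 0 then v else min v (padicValNat p c) : ℕ) : ℕ∞) =
      min (v : ℕ∞) (emultiplicity p c) := by
  split_ifs with hc
  · rw [hc, emultiplicity_zero, min_top_right]
  · rw [Nat.mono_cast.map_min, padicValNat_eq_emultiplicity_of_ne_one hp hc]

theorem stmt18_general {ℓ m v v' : ℕ} {d : ℤ} {w : ℕ → ℕ} (hℓ : ℓ ≠ 0) (hv : v ≤ m)
    (hv' : (v' : ℕ∞) = min (m : ℕ∞) (emultiplicity (ℓ : ℤ) d))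
    (hw : ∀ c, (w c : ℕ∞) = min (v : ℕ∞) (emultiplicity ℓ c)) :
    ∑ c ∈ range (ℓ ^ m),
        Complex.exp (2 * Real.pi * Complex.I * ((c * d : ℤ) : ℂ) / (ℓ : ℂ) ^ m) *
          ∑ k ∈ range (w c + 1), ((ℓ : ℂ) ^ k)⁻¹ =
      (ℓ : ℂ) ^ ((m : ℤ) - 2 * (v : ℤ)) * ∑ j ∈ range (v + v' + 1 - m), (ℓ : ℂ) ^ (2 * j) := by
  have hv'm : v' ≤ m := Nat.cast_le.1 (hv'.trans_le (min_le_left _ _))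
  rw [sum_range_exp_mul_sum_range_emultiplicity hℓ hv hv' hw,
    sum_Icc_pow_sub_mul_inv_pow (Nat.cast_ne_zero.2 hℓ) hv hv'm]

/-- The rank-2 local character sum evaluation: for a prime `ℓ`, `m ≥ 0`, nonzero
integers `d₁, d₂`, with `v = min(m, v_ℓ(d₁))`, `v' = min(m, v_ℓ(d₂))` and
`w(c) = min(m, v_ℓ(d₁), v_ℓ(c))` (with `v_ℓ(0) = ∞`), one has
`Σ_{c=0}^{ℓ^m−1} e^{2πi c d₂/ℓ^m}·(Σ_{k=0}^{w(c)} ℓ^{−k})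
  = ℓ^{m−2v}·Σ_{j=0}^{v+v'−m} ℓ^{2j}`,
the right-hand sum being empty when `v + v' < m`. -/
theorem stmt18 (ℓ : ℕ) (hℓ : ℓ.Prime) (m : ℕ) (d₁ d₂ : ℤ)
    (hd₁ : d₁ ≠ 0) (hd₂ : d₂ ≠ 0) (v v' : ℕ) (w : ℕ → ℕ)
    (hv : v = min m (padicValInt ℓ d₁)) (hv' : v' = min m (padicValInt ℓ d₂))
    (hw : ∀ c, w c = if c = 0 then min m (padicValInt ℓ d₁)
      else min (min m (padicValInt ℓ d₁)) (padicValNat ℓ c)) :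
    ∑ c ∈ Finset.range (ℓ ^ m),
        Complex.exp (2 * Real.pi * Complex.I * (((c : ℤ) * d₂ : ℤ) : ℂ) /
            (ℓ : ℂ) ^ m) *
          ∑ k ∈ Finset.range (w c + 1), ((ℓ : ℂ) ^ k)⁻¹
      = (ℓ : ℂ) ^ ((m : ℤ) - 2 * (v : ℤ)) *
          ∑ j ∈ Finset.range (v + v' + 1 - m), (ℓ : ℂ) ^ (2 * j) := by
  subst hv
  exact stmt18_general hℓ.ne_zero (min_le_left _ _)
    (by rw [hv', Nat.mono_cast.map_min, natCast_padicValInt_eq_emultiplicity hℓ.ne_one hd₂])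
    (fun c ↦ by rw [hw, natCast_ite_min_padicValNat hℓ.ne_one])
end
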